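/- Let (a^k)_k and (b^k)_k be two sequences in the class 𝒮′, and suppose (a^k, b^k)_k is μ-distributed for some tight probability measure μ on ℝ². Then for every bounded continuous function φ : ℝ → ℝ, lim_{k→∞} (1/k)·Trace[φ(J(a^k,b^k))] = (1/π) ∫_{ℝ²} ∫_0^π φ(x + 2y·cos t) dt dμ(x,y). -/

import Mathlib

/-!
If the entries of `J` are nearly constant, equal to `(x, y)`, along a block of `L` rows, then the
waves `cos (n t)` and `sin (n t)` cut to the block are approximate eigenvectors of `J` for
`x + 2 y cos t`, so a Lipschitz `f (J)` almost multiplies them by `f (x + 2 y cos t)`. Since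
`∑ n, F n n` is the average over `t` of the quadratic forms of `F` at these waves (Parseval), the
block contributes about `L` times the mean of `f (x + 2 y cos t)` to the trace of `f (J)`.

The error of a block is `L` times the oscillation of the entries there, which sums to `L` times the
total variation, `o(k)`, plus a term of order `|y| √L` from cutting the waves. The latter is
`O(|y| / √L)` per row; capped at the trivial bound `2 sup |f|`, it is a bounded continuous function
of `y`, so its average converges to its `μ`-integral, which vanishes as `L → ∞` by dominated
convergence. Unbounded entries thus need no truncation. Finally, Lipschitz test functions suffice
for the weak convergence of the spectral distributions.
-/

open Filter MeasureTheory

noncomputable section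

/-- The `k × k` Jacobi (real symmetric tridiagonal) matrix with diagonal entries
`a 0, …, a (k-1)` and sub/super-diagonal entries `b 0, …, b (k-2)` (0-indexed). -/
def jacobiMatrix (k : ℕ) (a b : ℕ → ℝ) : Matrix (Fin k) (Fin k) ℝ :=
  Matrix.of fun i j =>
    if (i : ℕ) = (j : ℕ) then a i
    else if (i : ℕ) + 1 = (j : ℕ) then b i
    else if (j : ℕ) + 1 = (i : ℕ) then b j
    else 0

theorem jacobiMatrix_isHermitian (k : ℕ) (a b : ℕ → ℝ) :
    (jacobiMatrix k a b).IsHermitian := by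
  show _ = _
  ext i j
  simp only [Matrix.conjTranspose_apply, jacobiMatrix, Matrix.of_apply, star_trivial]
  by_cases h1 : (i : ℕ) = (j : ℕ)
  · have h : i = j := Fin.ext h1
    subst h
    rfl
  · have h1' : ¬ (j : ℕ) = (i : ℕ) := fun h => h1 h.symm
    by_cases h2 : (i : ℕ) + 1 = (j : ℕ)
    · have h3 : ¬ (j : ℕ) + 1 = (i : ℕ) := by omega
      simp [h1, h1', h2, h3]
    · by_cases h3 : (j : ℕ) + 1 = (i : ℕ) <;> simp [h1, h1', h2, h3]

/-- `Trace[φ(J(a,b))] = ∑ⱼ φ(λⱼ)`, the sum of `φ` over the eigenvalues of the Jacobi matrix. -/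
def jacobiTrace (k : ℕ) (a b : ℕ → ℝ) (φ : ℝ → ℝ) : ℝ :=
  ∑ i, φ ((jacobiMatrix_isHermitian k a b).eigenvalues i)

/-- The class `𝒮`: small deviations `∑ᵢ |a_{i+1}^k − a_i^k| = o(k)` and entries in `[0,1]`. -/
def MemS (a : ℕ → ℕ → ℝ) : Prop :=
  ((fun k : ℕ => ∑ i ∈ Finset.range (k - 1), |a k (i + 1) - a k i|)
      =o[Filter.atTop] fun k : ℕ => (k : ℝ)) ∧
  ∀ k : ℕ, ∀ i < k, a k i ∈ Set.Icc (0 : ℝ) 1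

/-- The class `𝒮′`: for every `δ ∈ (0,1)`, `∑ᵢ |a_{i+1}^k − a_i^k| = O(k^{1−δ})`, and
`maxᵢ |a_i^k| = O(log k)`. -/
def MemS' (a : ℕ → ℕ → ℝ) : Prop :=
  (∀ δ : ℝ, δ ∈ Set.Ioo (0 : ℝ) 1 →
    ((fun k : ℕ => ∑ i ∈ Finset.range (k - 1), |a k (i + 1) - a k i|)
        =O[Filter.atTop] fun k : ℕ => (k : ℝ) ^ (1 - δ))) ∧
  ∃ C : ℝ, ∀ᶠ k : ℕ in Filter.atTop, ∀ i < k, |a k i| ≤ C * Real.log k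

/-- `μ`-distributed on `I² = [0,1]²`. -/
def MuDistributedI (a b : ℕ → ℕ → ℝ) (μ : Measure (ℝ × ℝ)) : Prop :=
  ∀ ψ : ℝ × ℝ → ℝ, ContinuousOn ψ (Set.Icc (0 : ℝ) 1 ×ˢ Set.Icc (0 : ℝ) 1) →
    Filter.Tendsto (fun k : ℕ => (1 / (k : ℝ)) * ∑ j ∈ Finset.range k, ψ (a k j, b k j))
      Filter.atTop (nhds (∫ p, ψ p ∂μ))

/-- `μ`-distributed on `ℝ²` (test functions: bounded continuous). -/
def MuDistributedR (a b : ℕ → ℕ → ℝ) (μ : Measure (ℝ × ℝ)) : Prop :=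
  ∀ ψ : ℝ × ℝ → ℝ, Continuous ψ → (∃ C : ℝ, ∀ p, |ψ p| ≤ C) →
    Filter.Tendsto (fun k : ℕ => (1 / (k : ℝ)) * ∑ j ∈ Finset.range k, ψ (a k j, b k j))
      Filter.atTop (nhds (∫ p, ψ p ∂μ))

/-- Tightness via closed bounded rectangles. -/
def TightRect (μ : Measure (ℝ × ℝ)) : Prop :=
  ∀ ε : ℝ, 0 < ε → ∃ x₁ x₂ y₁ y₂ : ℝ,
    μ ((Set.Icc x₁ x₂ ×ˢ Set.Icc y₁ y₂)ᶜ) < ENNReal.ofReal ε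

/-- Almost everywhere increasing sequence of vectors. -/
def AEIncreasing (a : ℕ → ℕ → ℝ) : Prop :=
  Filter.Tendsto
    (fun k : ℕ => (((Finset.range (k - 1)).filter fun i => a k i ≤ a k (i + 1)).card : ℝ) / k)
    Filter.atTop (nhds 1)

/-- Almost everywhere decreasing sequence of vectors. -/
def AEDecreasing (a : ℕ → ℕ → ℝ) : Prop :=
  Filter.Tendsto
    (fun k : ℕ => (((Finset.range (k - 1)).filter fun i => a k (i + 1) ≤ a k i).card : ℝ) / k)
    Filter.atTop (nhds 1)

/-- Almost everywhere monotone sequence of vectors. -/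
def AEMonotone (a : ℕ → ℕ → ℝ) : Prop :=
  AEIncreasing a ∨ AEDecreasing a

open scoped NNReal Matrix

section SpectralForm

variable {ι : Type*} [Fintype ι] [DecidableEq ι] {A : Matrix ι ι ℝ}

theorem trace_cfc_eq_sum_eigenvalues (hA : A.IsHermitian) (f : ℝ → ℝ) :
    (cfc f A).trace = ∑ i, f (hA.eigenvalues i) := by
  rw [hA.cfc_eq, Matrix.IsHermitian.cfc, Unitary.conjStarAlgAut_apply, Matrix.trace_mul_cycle,
    Unitary.coe_star_mul_self, one_mul, Matrix.trace_diagonal]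
  rfl

/-- The coordinates of `v` in the orthonormal eigenbasis of the Hermitian matrix `A`. -/
def eigenCoords (hA : A.IsHermitian) (v : ι → ℝ) : ι → ℝ :=
  star (hA.eigenvectorUnitary : Matrix ι ι ℝ) *ᵥ v

theorem dotProduct_cfc_mulVec (hA : A.IsHermitian) (f : ℝ → ℝ) (v : ι → ℝ) :
    v ⬝ᵥ cfc f A *ᵥ v = ∑ i, f (hA.eigenvalues i) * eigenCoords hA v i ^ 2 := by
  have hdiag : cfc f A *ᵥ v = (hA.eigenvectorUnitary : Matrix ι ι ℝ) *ᵥ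
      (Matrix.diagonal (f ∘ hA.eigenvalues) *ᵥ eigenCoords hA v) := by
    rw [hA.cfc_eq, Matrix.IsHermitian.cfc, Unitary.conjStarAlgAut_apply, eigenCoords,
      Matrix.mulVec_mulVec, Matrix.mulVec_mulVec]
    rfl
  rw [hdiag, Matrix.dotProduct_mulVec, ← Matrix.mulVec_transpose]
  simp only [dotProduct, Matrix.mulVec_diagonal, Function.comp_apply]
  refine Finset.sum_congr rfl fun i _ => ?_
  rw [show ((hA.eigenvectorUnitary : Matrix ι ι ℝ)ᵀ *ᵥ v) i = eigenCoords hA v i from rfl]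
  ring

theorem sum_eigenCoords_sq (hA : A.IsHermitian) (v : ι → ℝ) :
    ∑ i, eigenCoords hA v i ^ 2 = ∑ i, v i ^ 2 := by
  simpa [cfc_const_one ℝ A hA.isSelfAdjoint, dotProduct, sq]
    using (dotProduct_cfc_mulVec hA (fun _ => 1) v).symm

theorem eigenCoords_mulVec_sub_smul (hA : A.IsHermitian) (v : ι → ℝ) (c : ℝ) (i : ι) :
    eigenCoords hA (A *ᵥ v - c • v) i = (hA.eigenvalues i - c) * eigenCoords hA v i := by
  have hdiag : star (hA.eigenvectorUnitary : Matrix ι ι ℝ) * A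
      = Matrix.diagonal hA.eigenvalues * star (hA.eigenvectorUnitary : Matrix ι ι ℝ) := by
    have h := congrArg (star (hA.eigenvectorUnitary : Matrix ι ι ℝ) * ·) hA.spectral_theorem
    simp only [Unitary.conjStarAlgAut_apply, ← mul_assoc, Unitary.coe_star_mul_self, one_mul] at h
    exact h
  rw [eigenCoords, Matrix.mulVec_sub, Matrix.mulVec_mulVec, hdiag, ← Matrix.mulVec_mulVec,
    Matrix.mulVec_smul]
  simp only [Pi.sub_apply, Pi.smul_apply, Matrix.mulVec_diagonal, smul_eq_mul, eigenCoords]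
  ring

theorem abs_cfc_apply_self_le (hA : A.IsHermitian) {f : ℝ → ℝ} {C : ℝ} (hf : ∀ x, |f x| ≤ C)
    (i : ι) : |cfc f A i i| ≤ C := by
  set e : ι → ℝ := Pi.single i 1 with he
  calc |cfc f A i i| = |∑ j, f (hA.eigenvalues j) * eigenCoords hA e j ^ 2| := by
        rw [← dotProduct_cfc_mulVec]; simp [he]
    _ ≤ ∑ j, C * eigenCoords hA e j ^ 2 := by
        refine (Finset.abs_sum_le_sum_abs _ _).trans (Finset.sum_le_sum fun j _ => ?_)
        rw [abs_mul, abs_sq]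
        gcongr
        exact hf _
    _ = C := by rw [← Finset.mul_sum, sum_eigenCoords_sq]; simp [he, Pi.single_apply]

theorem abs_dotProduct_cfc_mulVec_sub_le (hA : A.IsHermitian) {f : ℝ → ℝ} {K : ℝ≥0}
    (hf : LipschitzWith K f) (v : ι → ℝ) (c : ℝ) :
    |v ⬝ᵥ cfc f A *ᵥ v - f c * ∑ i, v i ^ 2|
      ≤ K * (√(∑ i, (A *ᵥ v - c • v) i ^ 2) * √(∑ i, v i ^ 2)) := by
  have hterm : ∀ i, |(f (hA.eigenvalues i) - f c) * eigenCoords hA v i ^ 2|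
      ≤ K * (|eigenCoords hA (A *ᵥ v - c • v) i| * |eigenCoords hA v i|) := fun i => by
    rw [eigenCoords_mulVec_sub_smul, abs_mul, abs_mul, abs_sq, ← sq_abs (eigenCoords hA v i)]
    have := hf.dist_le_mul (hA.eigenvalues i) c
    rw [Real.dist_eq, Real.dist_eq] at this
    calc _ ≤ K * |hA.eigenvalues i - c| * |eigenCoords hA v i| ^ 2 := by gcongr
      _ = _ := by ring
  calc |v ⬝ᵥ cfc f A *ᵥ v - f c * ∑ i, v i ^ 2|
      = |∑ i, (f (hA.eigenvalues i) - f c) * eigenCoords hA v i ^ 2| := by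
        rw [dotProduct_cfc_mulVec hA, ← sum_eigenCoords_sq hA v, Finset.mul_sum,
          ← Finset.sum_sub_distrib]
        simp only [sub_mul]
    _ ≤ K * ∑ i, |eigenCoords hA (A *ᵥ v - c • v) i| * |eigenCoords hA v i| := by
        rw [Finset.mul_sum]
        exact (Finset.abs_sum_le_sum_abs _ _).trans (Finset.sum_le_sum fun i _ => hterm i)
    _ ≤ _ := by
        gcongr
        refine (Real.sum_mul_le_sqrt_mul_sqrt _ _ _).trans_eq ?_
        simp only [sq_abs, sum_eigenCoords_sq]

end SpectralForm

section PlaneWaves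

/-- The uniform probability measure on `(0, π]`, the law of the quasi-momentum `t`. -/
def uniformAngle : Measure ℝ := ProbabilityTheory.cond volume (Set.Ioc 0 Real.pi)

instance : IsProbabilityMeasure uniformAngle :=
  ProbabilityTheory.cond_isProbabilityMeasure_of_finite (by simp [Real.pi_pos]) (by simp)

theorem integral_uniformAngle (g : ℝ → ℝ) :
    ∫ t, g t ∂uniformAngle = 1 / Real.pi * ∫ t in (0 : ℝ)..Real.pi, g t := by
  rw [uniformAngle, ProbabilityTheory.cond, integral_smul_measure,
    intervalIntegral.integral_of_le Real.pi_pos.le]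
  simp [Real.pi_pos.le]

theorem integrable_uniformAngle {g : ℝ → ℝ} (hg : Continuous g) :
    Integrable g uniformAngle :=
  (hg.integrableOn_Ioc).smul_measure (by simp [Real.pi_pos])

theorem abs_integral_uniformAngle_le {g : ℝ → ℝ} {C : ℝ} (hg : ∀ t, |g t| ≤ C) :
    |∫ t, g t ∂uniformAngle| ≤ C := by
  simpa using norm_integral_le_of_norm_le_const (μ := uniformAngle) (f := g) (ae_of_all _ hg)

theorem integral_cos_sub_mul_uniformAngle (m n : ℕ) :
    ∫ t, Real.cos (((m : ℝ) - n) * t) ∂uniformAngle = if m = n then 1 else 0 := by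
  rw [integral_uniformAngle]
  split_ifs with h
  · simp [h, Real.pi_ne_zero]
  · have hmn : (m : ℝ) - n ≠ 0 := sub_ne_zero.mpr (by exact_mod_cast h)
    have hsin : Real.sin (((m : ℝ) - n) * Real.pi) = 0 := by
      exact_mod_cast Real.sin_int_mul_pi ((m : ℤ) - n)
    rw [intervalIntegral.integral_comp_mul_left Real.cos hmn, integral_cos, hsin]
    simp

theorem integral_dotProduct_mulVec_cos_add_sin {ι : Type*} [Fintype ι] (F : Matrix ι ι ℝ)
    (χ : ι → ℝ) {e : ι → ℕ} (he : Function.Injective e) :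
    ∫ t, ((fun i => χ i * Real.cos (e i * t)) ⬝ᵥ F *ᵥ (fun i => χ i * Real.cos (e i * t))
      + (fun i => χ i * Real.sin (e i * t)) ⬝ᵥ F *ᵥ fun i => χ i * Real.sin (e i * t))
        ∂uniformAngle = ∑ i, χ i ^ 2 * F i i := by
  classical
  have hexpand : ∀ t,
      (fun i => χ i * Real.cos (e i * t)) ⬝ᵥ F *ᵥ (fun i => χ i * Real.cos (e i * t))
      + (fun i => χ i * Real.sin (e i * t)) ⬝ᵥ F *ᵥ (fun i => χ i * Real.sin (e i * t))
      = ∑ i, ∑ j, χ i * χ j * F i j * Real.cos (((e i : ℝ) - e j) * t) := fun t => by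
    simp only [dotProduct, Matrix.mulVec, Finset.mul_sum, ← Finset.sum_add_distrib, sub_mul,
      Real.cos_sub]
    exact Finset.sum_congr rfl fun i _ => Finset.sum_congr rfl fun j _ => by ring
  simp_rw [hexpand]
  rw [integral_finsetSum _ fun i _ => integrable_uniformAngle (by fun_prop)]
  refine Finset.sum_congr rfl fun i _ => ?_
  rw [integral_finsetSum _ fun j _ => integrable_uniformAngle (by fun_prop)]
  simp_rw [integral_const_mul, integral_cos_sub_mul_uniformAngle, he.eq_iff]
  simp [sq]

end PlaneWaves

section JacobiResidual

/-- Real solutions of the constant-coefficient eigenvalue equation `w (n + 1) + w (n - 1) = 2 s w n`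
that are bounded by `1`, such as `cos (n t)` and `sin (n t)` with `s = cos t`. -/
structure IsPlaneWave (s : ℝ) (w : ℕ → ℝ) : Prop where
  abs_freq_le_one : |s| ≤ 1
  abs_le_one : ∀ n, |w n| ≤ 1
  add_eq : ∀ n, w (n + 2) + w n = 2 * s * w (n + 1)

theorem isPlaneWave_cos (t : ℝ) : IsPlaneWave (Real.cos t) fun n => Real.cos (n * t) where
  abs_freq_le_one := Real.abs_cos_le_one t
  abs_le_one n := Real.abs_cos_le_one _
  add_eq n := by
    rw [Real.cos_add_cos]; push_cast; ring_nf

theorem isPlaneWave_sin (t : ℝ) : IsPlaneWave (Real.cos t) fun n => Real.sin (n * t) where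
  abs_freq_le_one := Real.abs_cos_le_one t
  abs_le_one n := Real.abs_sin_le_one _
  add_eq n := by
    rw [Real.sin_add_sin]; push_cast; ring_nf

/-- The wave `w` cut to the block of rows `[p, q)`. Row `n` carries the value at `n + 1`, so the
block occupies the positions `p + 1, …, q`. -/
def cutWave (p q : ℕ) (w : ℕ → ℝ) (m : ℕ) : ℝ :=
  if p < m ∧ m ≤ q then w m else 0

/-- The vector `V 1, …, V k`. The shift leaves `V 0` and `V (k + 1)` for the Dirichlet boundary
values. -/
def innerEntries (k : ℕ) (V : ℕ → ℝ) : Fin k → ℝ :=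
  fun i => V (i + 1)

/-- The residual `(J - c) v` measuring how far the vector `v` of entries `V 1, …, V k` is from being
an eigenvector of the Jacobi matrix `J`. -/
def jacobiResidual (k : ℕ) (a b : ℕ → ℝ) (c : ℝ) (V : ℕ → ℝ) : Fin k → ℝ :=
  jacobiMatrix k a b *ᵥ innerEntries k V - c • innerEntries k V

/-- Counts how many of the rows `p - 1, p, q - 1, q`, where cutting a wave to the block `[p, q)` is
felt, are equal to `n`. -/
def edgeCount (p q n : ℕ) : ℝ :=
  (if n + 1 = p then 1 else 0) + (if n = p then 1 else 0)
    + (if n + 1 = q then 1 else 0) + if n = q then 1 else 0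

variable {k p q : ℕ} {a b w : ℕ → ℝ} {s x y ω : ℝ}

/-- The junk value `b (0 - 1) = b 0` in the first row is harmless: it multiplies `V 0 = 0`. -/
theorem jacobiMatrix_mulVec_apply {V : ℕ → ℝ} (h0 : V 0 = 0) (hk : V (k + 1) = 0) (n : Fin k) :
    (jacobiMatrix k a b *ᵥ innerEntries k V) n
      = a n * V (n + 1) + b n * V (n + 2) + b (n - 1) * V n := by
  obtain ⟨n, hn⟩ := n
  have hentry : ∀ i : ℕ, (if n = i then a n else if n + 1 = i then b n
      else if i + 1 = n then b i else 0) * V (i + 1)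
      = (if i = n then a n * V (n + 1) else 0) + (if i = n + 1 then b n * V (n + 2) else 0)
        + if i = n - 1 then b (n - 1) * V n else 0 := fun i => by
    rcases n with _ | n <;> split_ifs <;> first | omega | contradiction | (subst_vars; simp [h0])
  have hlast : (if n + 1 < k then b n * V (n + 2) else 0) = b n * V (n + 2) := by
    split_ifs with h
    · rfl
    · rw [show n + 2 = k + 1 by omega, hk, mul_zero]
  simp only [Matrix.mulVec, dotProduct, innerEntries, jacobiMatrix, Matrix.of_apply]
  rw [Fin.sum_univ_eq_sum_range (fun i => (if n = i then a n else if n + 1 = i then b n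
      else if i + 1 = n then b i else 0) * V (i + 1)), Finset.sum_congr rfl fun i _ => hentry i]
  simp only [Finset.sum_add_distrib, Finset.sum_ite_eq', Finset.mem_range, hn, hlast,
    (Nat.sub_le _ _).trans_lt hn, if_true]

theorem innerEntries_cutWave (k p q : ℕ) (w : ℕ → ℝ) :
    innerEntries k (cutWave p q w) = fun i : Fin k => cutWave p q 1 (i + 1) * w (i + 1) := by
  ext i
  simp [innerEntries, cutWave]

theorem sq_mul_cutWave_le {m : ℕ} {u : ℝ} (hw : |w m| ≤ 1) (hu : p < m → m ≤ q → |u| ≤ ω) :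
    (u * cutWave p q w m) ^ 2 ≤ ω ^ 2 * cutWave p q 1 m := by
  unfold cutWave
  split_ifs with hm
  · rw [mul_pow, ← sq_abs u, ← sq_abs (w m)]
    exact mul_le_mul (pow_le_pow_left₀ (abs_nonneg u) (hu hm.1 hm.2) 2)
      (pow_le_one₀ (abs_nonneg _) hw) (by positivity) (by positivity)
  · simp

theorem sum_cutWave_one_add_le (k c : ℕ) (hpq : p ≤ q) :
    ∑ n ∈ Finset.range k, cutWave p q 1 (n + c) ≤ (q - p : ℝ) := by
  simp only [cutWave, Pi.one_apply, Finset.sum_boole]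
  rw [← Nat.cast_sub hpq]
  gcongr
  calc _ ≤ (Finset.Ico (p + 1 - c) (q + 1 - c)).card :=
        Finset.card_le_card fun n => by
          simp only [Finset.mem_filter, Finset.mem_range, Finset.mem_Ico]
          omega
    _ ≤ q - p := by rw [Nat.card_Ico]; omega

theorem sum_edgeCount_le (k p q : ℕ) : ∑ n ∈ Finset.range k, edgeCount p q n ≤ 4 := by
  have hcard : ∀ P : ℕ → Prop, ∀ [DecidablePred P], (∀ m n, P m → P n → m = n) →
      ∑ n ∈ Finset.range k, (if P n then (1 : ℝ) else 0) ≤ 1 := fun P _ hP => by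
    rw [Finset.sum_boole]
    exact_mod_cast Finset.card_le_one.mpr fun m hm n hn =>
      hP m n (Finset.mem_filter.mp hm).2 (Finset.mem_filter.mp hn).2
  simp only [edgeCount, Finset.sum_add_distrib]
  linarith [hcard (· + 1 = p) (by omega), hcard (· = p) (by omega), hcard (· + 1 = q) (by omega),
    hcard (· = q) (by omega)]

theorem IsPlaneWave.sq_cutWave_recurrence_le (hw : IsPlaneWave s w) (p q n : ℕ) :
    (cutWave p q w (n + 2) + cutWave p q w n - 2 * s * cutWave p q w (n + 1)) ^ 2
      ≤ 16 * edgeCount p q n := by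
  set V := cutWave p q w with hV
  by_cases hedge : n + 1 = p ∨ n = p ∨ n + 1 = q ∨ n = q
  · have hV1 : ∀ m, |V m| ≤ 1 := fun m => by
      rw [hV, cutWave]
      split_ifs
      exacts [hw.abs_le_one m, by simp]
    have habs : |V (n + 2) + V n - 2 * s * V (n + 1)| ≤ 4 :=
      calc _ ≤ |V (n + 2)| + |V n| + 2 * (|s| * |V (n + 1)|) := by
            refine (abs_sub _ _).trans (add_le_add (abs_add_le _ _) (le_of_eq ?_))
            rw [abs_mul, abs_mul, abs_two, mul_assoc]
        _ ≤ 1 + 1 + 2 * (1 * 1) := by gcongr <;> first | apply hV1 | exact hw.abs_freq_le_one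
        _ = 4 := by norm_num
    have hone : 1 ≤ edgeCount p q n := by
      unfold edgeCount
      split_ifs <;> first | omega | norm_num
    nlinarith [abs_le.mp habs]
  · have hzero : V (n + 2) + V n - 2 * s * V (n + 1) = 0 := by
      by_cases hin : p < n ∧ n + 1 < q
      · rw [hV, cutWave, cutWave, cutWave, if_pos (by omega), if_pos (by omega),
          if_pos (by omega), hw.add_eq, sub_self]
      · rw [hV, cutWave, cutWave, cutWave, if_neg (by omega), if_neg (by omega),
          if_neg (by omega)]
        ring
    rw [hzero, zero_pow two_ne_zero, edgeCount]
    positivity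

theorem IsPlaneWave.sq_jacobiResidual_apply_le (hw : IsPlaneWave s w) (hqk : q ≤ k)
    (ha : ∀ n, p ≤ n → n < q → |a n - x| ≤ ω) (hb : ∀ n, p ≤ n + 1 → n < q → |b n - y| ≤ ω)
    (n : Fin k) :
    jacobiResidual k a b (x + 2 * y * s) (cutWave p q w) n ^ 2
      ≤ 4 * (ω ^ 2 * (cutWave p q 1 ((n : ℕ) + 1)
        + cutWave p q 1 ((n : ℕ) + 2) + cutWave p q 1 (n : ℕ)) + 16 * y ^ 2 * edgeCount p q n) := by
  obtain ⟨n, hn⟩ := n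
  set V := cutWave p q w
  have hA : ((a n - x) * V (n + 1)) ^ 2 ≤ ω ^ 2 * cutWave p q 1 (n + 1) :=
    sq_mul_cutWave_le (hw.abs_le_one _) fun _ _ => ha n (by omega) (by omega)
  have hB : ((b n - y) * V (n + 2)) ^ 2 ≤ ω ^ 2 * cutWave p q 1 (n + 2) :=
    sq_mul_cutWave_le (hw.abs_le_one _) fun _ _ => hb n (by omega) (by omega)
  have hB' : ((b (n - 1) - y) * V n) ^ 2 ≤ ω ^ 2 * cutWave p q 1 n :=
    sq_mul_cutWave_le (hw.abs_le_one _) fun _ _ => hb (n - 1) (by omega) (by omega)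
  have hcut : (y * (V (n + 2) + V n - 2 * s * V (n + 1))) ^ 2 ≤ y ^ 2 * (16 * edgeCount p q n) := by
    rw [mul_pow]
    exact mul_le_mul_of_nonneg_left (hw.sq_cutWave_recurrence_le p q n) (sq_nonneg y)
  have hrow : jacobiResidual k a b (x + 2 * y * s) V ⟨n, hn⟩ = (a n - x) * V (n + 1)
      + (b n - y) * V (n + 2) + (b (n - 1) - y) * V n
      + y * (V (n + 2) + V n - 2 * s * V (n + 1)) := by
    rw [jacobiResidual, Pi.sub_apply, Pi.smul_apply, smul_eq_mul,
      jacobiMatrix_mulVec_apply (if_neg (by omega)) (if_neg (by omega)), innerEntries]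
    ring
  have hcauchy : ∀ A B B' E : ℝ, (A + B + B' + E) ^ 2 ≤ 4 * (A ^ 2 + B ^ 2 + B' ^ 2 + E ^ 2) :=
    fun A B B' E => by
      linarith [sq_nonneg (A - B), sq_nonneg (A - B'), sq_nonneg (A - E), sq_nonneg (B - B'),
        sq_nonneg (B - E), sq_nonneg (B' - E)]
  rw [hrow]
  linarith [hcauchy ((a n - x) * V (n + 1)) ((b n - y) * V (n + 2)) ((b (n - 1) - y) * V n)
    (y * (V (n + 2) + V n - 2 * s * V (n + 1)))]

theorem IsPlaneWave.sum_sq_jacobiResidual_le (hw : IsPlaneWave s w) (hpq : p ≤ q) (hqk : q ≤ k)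
    (ha : ∀ n, p ≤ n → n < q → |a n - x| ≤ ω) (hb : ∀ n, p ≤ n + 1 → n < q → |b n - y| ≤ ω) :
    ∑ n, jacobiResidual k a b (x + 2 * y * s) (cutWave p q w) n ^ 2
      ≤ 12 * ω ^ 2 * (q - p) + 256 * y ^ 2 := by
  refine (Finset.sum_le_sum fun n _ => hw.sq_jacobiResidual_apply_le hqk ha hb n).trans ?_
  rw [Fin.sum_univ_eq_sum_range fun n => 4 * (ω ^ 2 * (cutWave p q 1 (n + 1)
    + cutWave p q 1 (n + 2) + cutWave p q 1 n)
    + 16 * y ^ 2 * edgeCount p q n)]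
  simp only [← Finset.mul_sum, Finset.sum_add_distrib]
  calc _ ≤ 4 * (ω ^ 2 * ((q - p) + (q - p) + (q - p)) + 16 * y ^ 2 * 4) := by
        gcongr
        exacts [sum_cutWave_one_add_le k 1 hpq, sum_cutWave_one_add_le k 2 hpq,
          sum_cutWave_one_add_le k 0 hpq, sum_edgeCount_le k p q]
    _ = _ := by ring

theorem IsPlaneWave.sum_sq_cutWave_le (hw : IsPlaneWave s w) (hpq : p ≤ q) (k : ℕ) :
    ∑ i, innerEntries k (cutWave p q w) i ^ 2 ≤ q - p := by
  refine le_trans ?_ (sum_cutWave_one_add_le k 1 hpq)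
  rw [← Fin.sum_univ_eq_sum_range fun n => cutWave p q 1 (n + 1)]
  gcongr with i
  simpa [innerEntries] using sq_mul_cutWave_le (p := p) (q := q) (hw.abs_le_one (i + 1))
    fun _ _ => (abs_one (α := ℝ)).le

theorem IsPlaneWave.sqrt_jacobiResidual_le (hw : IsPlaneWave s w) (hpq : p ≤ q) (hqk : q ≤ k)
    (hω : 0 ≤ ω) (ha : ∀ n, p ≤ n → n < q → |a n - x| ≤ ω)
    (hb : ∀ n, p ≤ n + 1 → n < q → |b n - y| ≤ ω) :
    √(∑ n, jacobiResidual k a b (x + 2 * y * s) (cutWave p q w) n ^ 2)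
      ≤ 4 * ω * √(q - p) + 16 * |y| := by
  have hlen : (0 : ℝ) ≤ q - p := sub_nonneg.mpr (by exact_mod_cast hpq)
  refine Real.sqrt_le_iff.mpr ⟨by positivity, (hw.sum_sq_jacobiResidual_le hpq hqk ha hb).trans ?_⟩
  have hcross : 0 ≤ ω * √(q - p) * |y| := by positivity
  have hsq : (4 * ω * √(q - p : ℝ) + 16 * |y|) ^ 2
      = 16 * ω ^ 2 * (q - p) + 128 * (ω * √(q - p) * |y|) + 256 * y ^ 2 := by
    rw [add_sq, mul_pow, mul_pow, mul_pow, Real.sq_sqrt hlen, sq_abs]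
    ring
  nlinarith [mul_nonneg (sq_nonneg ω) hlen]

end JacobiResidual

section SymbolMean

/-- The mean of `f` over the range of the symbol `x + 2 y cos t` of the constant-coefficient Jacobi
matrix with entries `p = (x, y)`. -/
def symbolMean (f : ℝ → ℝ) (p : ℝ × ℝ) : ℝ :=
  ∫ t, f (p.1 + 2 * p.2 * Real.cos t) ∂uniformAngle

variable {f : ℝ → ℝ} {C : ℝ}

theorem abs_symbolMean_le (hf : ∀ x, |f x| ≤ C) (p : ℝ × ℝ) : |symbolMean f p| ≤ C :=
  abs_integral_uniformAngle_le fun _ => hf _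

theorem continuous_symbolMean (hfc : Continuous f) (hf : ∀ x, |f x| ≤ C) :
    Continuous (symbolMean f) :=
  continuous_of_dominated (bound := fun _ => C)
    (fun _ => Continuous.aestronglyMeasurable (by fun_prop))
    (fun _ => ae_of_all _ fun _ => hf _) (integrable_const C) (ae_of_all _ fun _ => by fun_prop)

end SymbolMean

section Block

variable {k p q : ℕ} {a b w : ℕ → ℝ} {s x y ω C : ℝ} {f : ℝ → ℝ} {K : ℝ≥0}

/-- The `n`-th diagonal entry of `f (J)`, extended by `0` beyond the size `k` of the Jacobi matrix
`J`. -/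
def jacobiDiag (k : ℕ) (a b : ℕ → ℝ) (f : ℝ → ℝ) (n : ℕ) : ℝ :=
  if h : n < k then cfc f (jacobiMatrix k a b) ⟨n, h⟩ ⟨n, h⟩ else 0

theorem sum_jacobiDiag (k : ℕ) (a b : ℕ → ℝ) (f : ℝ → ℝ) :
    ∑ n ∈ Finset.range k, jacobiDiag k a b f n = jacobiTrace k a b f := by
  rw [jacobiTrace, ← trace_cfc_eq_sum_eigenvalues, ← Fin.sum_univ_eq_sum_range]
  simp [jacobiDiag, Matrix.trace]

theorem abs_jacobiDiag_le (hC : ∀ x, |f x| ≤ C) (n : ℕ) : |jacobiDiag k a b f n| ≤ C := by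
  unfold jacobiDiag
  split_ifs
  · exact abs_cfc_apply_self_le (jacobiMatrix_isHermitian k a b) hC _
  · simpa using (abs_nonneg _).trans (hC 0)

theorem sum_cutWave_one_mul_cfc (hqk : q ≤ k) :
    ∑ i : Fin k, cutWave p q 1 (i + 1) ^ 2 * cfc f (jacobiMatrix k a b) i i
      = ∑ n ∈ Finset.Ico p q, jacobiDiag k a b f n := by
  have hterm : ∀ i : Fin k, cutWave p q 1 (i + 1) ^ 2 * cfc f (jacobiMatrix k a b) i i
      = if (i : ℕ) ∈ Finset.Ico p q then jacobiDiag k a b f i else 0 := fun i => by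
    simp [jacobiDiag, cutWave]
  simp_rw [hterm]
  rw [Fin.sum_univ_eq_sum_range fun n => if n ∈ Finset.Ico p q then jacobiDiag k a b f n else 0,
    Finset.sum_ite_mem, Finset.inter_eq_right.mpr
      (Finset.range_eq_Ico k ▸ Finset.Ico_subset_Ico p.zero_le hqk)]

theorem sum_sq_cutWave_cos_add_sin (hpq : p ≤ q) (hqk : q ≤ k) (t : ℝ) :
    ∑ i, innerEntries k (cutWave p q fun n => Real.cos (n * t)) i ^ 2
      + ∑ i, innerEntries k (cutWave p q fun n => Real.sin (n * t)) i ^ 2 = q - p := by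
  have hterm : ∀ n, cutWave p q (fun n => Real.cos (n * t)) (n + 1) ^ 2
      + cutWave p q (fun n => Real.sin (n * t)) (n + 1) ^ 2
      = if n ∈ Finset.Ico p q then 1 else 0 := fun n => by
    simp only [cutWave, Finset.mem_Ico, Order.lt_add_one_iff, Order.add_one_le_iff]
    split_ifs <;> simp
  simp only [innerEntries]
  rw [← Finset.sum_add_distrib, Fin.sum_univ_eq_sum_range fun n =>
      cutWave p q (fun n => Real.cos (n * t)) (n + 1) ^ 2
        + cutWave p q (fun n => Real.sin (n * t)) (n + 1) ^ 2,
    Finset.sum_congr rfl fun n _ => hterm n, Finset.sum_ite_mem,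
    Finset.inter_eq_right.mpr (Finset.range_eq_Ico k ▸ Finset.Ico_subset_Ico p.zero_le hqk)]
  simp [Nat.cast_sub hpq]

theorem IsPlaneWave.abs_dotProduct_cfc_sub_le (hw : IsPlaneWave s w) (hf : LipschitzWith K f)
    (hpq : p ≤ q) (hqk : q ≤ k) (hω : 0 ≤ ω) (ha : ∀ n, p ≤ n → n < q → |a n - x| ≤ ω)
    (hb : ∀ n, p ≤ n + 1 → n < q → |b n - y| ≤ ω) {v : Fin k → ℝ}
    (hv : v = innerEntries k (cutWave p q w)) :
    |v ⬝ᵥ cfc f (jacobiMatrix k a b) *ᵥ v - f (x + 2 * y * s) * ∑ i, v i ^ 2|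
      ≤ K * (4 * ω * (q - p) + 16 * |y| * √(q - p)) := by
  have hlen : (0 : ℝ) ≤ q - p := sub_nonneg.mpr (by exact_mod_cast hpq)
  have hres : √(∑ i, (jacobiMatrix k a b *ᵥ v - (x + 2 * y * s) • v) i ^ 2)
      ≤ 4 * ω * √(q - p) + 16 * |y| := hv ▸ hw.sqrt_jacobiResidual_le hpq hqk hω ha hb
  have hnorm : ∑ i, v i ^ 2 ≤ q - p := hv ▸ hw.sum_sq_cutWave_le hpq k
  calc _ ≤ _ := abs_dotProduct_cfc_mulVec_sub_le (jacobiMatrix_isHermitian k a b) hf v _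
    _ ≤ K * ((4 * ω * √(q - p) + 16 * |y|) * √(q - p)) := by gcongr
    _ = K * (4 * ω * √(q - p) ^ 2 + 16 * |y| * √(q - p)) := by ring
    _ = _ := by rw [Real.sq_sqrt hlen]

theorem abs_sum_jacobiDiag_sub_le (hf : LipschitzWith K f)
    (hpq : p ≤ q) (hqk : q ≤ k) (hω : 0 ≤ ω) (ha : ∀ n, p ≤ n → n < q → |a n - x| ≤ ω)
    (hb : ∀ n, p ≤ n + 1 → n < q → |b n - y| ≤ ω) :
    |∑ n ∈ Finset.Ico p q, jacobiDiag k a b f n - (q - p) * symbolMean f (x, y)|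
      ≤ K * (8 * ω * (q - p) + 32 * |y| * √(q - p)) := by
  set F := cfc f (jacobiMatrix k a b)
  set c : ℝ → Fin k → ℝ := fun t => innerEntries k (cutWave p q fun n => Real.cos (n * t)) with hc
  set d : ℝ → Fin k → ℝ := fun t => innerEntries k (cutWave p q fun n => Real.sin (n * t)) with hd
  have hparseval : ∫ t, (c t ⬝ᵥ F *ᵥ c t + d t ⬝ᵥ F *ᵥ d t) ∂uniformAngle
      = ∑ n ∈ Finset.Ico p q, jacobiDiag k a b f n := by
    rw [← sum_cutWave_one_mul_cfc hqk, ← integral_dotProduct_mulVec_cos_add_sin F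
      (fun i : Fin k => cutWave p q 1 (i + 1)) (e := fun i => i + 1)
      fun i j h => Fin.ext (Nat.succ.inj h)]
    simp only [hc, hd, innerEntries_cutWave]
  have hcont : Continuous fun t => c t ⬝ᵥ F *ᵥ c t + d t ⬝ᵥ F *ᵥ d t := by
    simp only [hc, hd, innerEntries_cutWave]
    fun_prop
  rw [← hparseval, symbolMean, ← integral_const_mul, ← integral_sub
    (integrable_uniformAngle hcont) (integrable_uniformAngle (by have := hf.continuous; fun_prop))]
  refine abs_integral_uniformAngle_le fun t => ?_
  have hcos := (isPlaneWave_cos t).abs_dotProduct_cfc_sub_le hf hpq hqk hω ha hb (v := c t) rfl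
  have hsin := (isPlaneWave_sin t).abs_dotProduct_cfc_sub_le hf hpq hqk hω ha hb (v := d t) rfl
  have hsplit : ∑ i, c t i ^ 2 + ∑ i, d t i ^ 2 = q - p := sum_sq_cutWave_cos_add_sin hpq hqk t
  calc _ = |(c t ⬝ᵥ F *ᵥ c t - f (x + 2 * y * Real.cos t) * ∑ i, c t i ^ 2)
        + (d t ⬝ᵥ F *ᵥ d t - f (x + 2 * y * Real.cos t) * ∑ i, d t i ^ 2)| := by
        congr 1
        linear_combination f (x + 2 * y * Real.cos t) * hsplit
    _ ≤ _ := (abs_add_le _ _).trans (add_le_add hcos hsin)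
    _ = _ := by ring

end Block

section Variation

theorem abs_sub_le_sum_Ico {c : ℕ → ℝ} {m n i j : ℕ} (hi : i ∈ Set.Icc m n) (hj : j ∈ Set.Icc m n) :
    |c i - c j| ≤ ∑ l ∈ Finset.Ico m n, |c (l + 1) - c l| := by
  wlog hij : i ≤ j generalizing i j
  · rw [abs_sub_comm]
    exact this hj hi (le_of_not_ge hij)
  calc |c i - c j| ≤ ∑ l ∈ Finset.Ico i j, |c (l + 1) - c l| := by
        simpa only [Real.dist_eq, abs_sub_comm] using dist_le_Ico_sum_dist c hij
    _ ≤ _ := Finset.sum_le_sum_of_subset_of_nonneg (Finset.Ico_subset_Ico hi.1 hj.2)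
        fun _ _ _ => abs_nonneg _

theorem sum_range_sum_Ico_of_monotone {u : ℕ → ℕ} (hu : Monotone u) (g : ℕ → ℝ) (N : ℕ) :
    ∑ m ∈ Finset.range N, ∑ n ∈ Finset.Ico (u m) (u (m + 1)), g n
      = ∑ n ∈ Finset.Ico (u 0) (u N), g n := by
  induction N with
  | zero => simp
  | succ N ih =>
    rw [Finset.sum_range_succ, ih, Finset.sum_Ico_consecutive _ (hu N.zero_le) (hu N.le_succ)]

end Variation

section BlockDecomposition

variable {k p q L : ℕ} {a b : ℕ → ℝ} {C : ℝ} {f : ℝ → ℝ} {K : ℝ≥0}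

/-- The error per row, within a block of length `L`, caused by cutting the plane waves at the ends
of the block when the off-diagonal entry is `y`. Capping it at the trivial bound `2 C` makes it an
admissible test function for `μ`-distributed sequences. -/
def edgeError (C : ℝ) (K : ℝ≥0) (L : ℕ) (y : ℝ) : ℝ :=
  min (2 * C) (32 * K * |y| / √L)

theorem edgeError_nonneg (hC : 0 ≤ C) (K : ℝ≥0) (L : ℕ) (y : ℝ) : 0 ≤ edgeError C K L y :=
  le_min (by positivity) (by positivity)

theorem abs_sum_jacobiDiag_sub_mul_symbolMean_le (hf : LipschitzWith K f) (hC : ∀ x, |f x| ≤ C)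
    (hqk : q ≤ k) {j : ℕ} (hj : j ∈ Finset.Ico p q) :
    |∑ n ∈ Finset.Ico p q, jacobiDiag k a b f n - (q - p) * symbolMean f (a j, b j)|
      ≤ (q - p) * (8 * K * ∑ i ∈ Finset.Ico (p - 1) (q - 1),
        (|a (i + 1) - a i| + |b (i + 1) - b i|) + edgeError C K (q - p) (b j)) := by
  rw [Finset.mem_Ico] at hj
  have hpq : p ≤ q := by omega
  set ω := ∑ i ∈ Finset.Ico (p - 1) (q - 1), (|a (i + 1) - a i| + |b (i + 1) - b i|)
  have hω : 0 ≤ ω := Finset.sum_nonneg fun _ _ => by positivity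
  have hosc : ∀ {c : ℕ → ℝ}, (∀ i, |c (i + 1) - c i| ≤ |a (i + 1) - a i| + |b (i + 1) - b i|) →
      ∀ n, p ≤ n + 1 → n < q → |c n - c j| ≤ ω := fun hc n hpn hnq =>
    (abs_sub_le_sum_Ico (m := p - 1) (n := q - 1) ⟨by omega, by omega⟩ ⟨by omega, by omega⟩).trans
      (Finset.sum_le_sum fun i _ => hc i)
  have hwave := abs_sum_jacobiDiag_sub_le hf hpq hqk hω (a := a) (x := a j)
    (fun n hpn hnq => hosc (fun i => le_add_of_nonneg_right (abs_nonneg _)) n (by omega) hnq)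
    (hosc (c := b) fun i => le_add_of_nonneg_left (abs_nonneg _))
  have hlen : (0 : ℝ) < q - p := sub_pos.mpr (by exact_mod_cast (by omega : p < q))
  have htrivial : |∑ n ∈ Finset.Ico p q, jacobiDiag k a b f n - (q - p) * symbolMean f (a j, b j)|
      ≤ (q - p) * (2 * C) :=
    calc _ ≤ (q - p) * C + (q - p) * C := by
          refine (abs_sub _ _).trans (add_le_add ?_ ?_)
          · refine (Finset.abs_sum_le_sum_abs _ _).trans
              ((Finset.sum_le_card_nsmul _ _ C fun n _ => abs_jacobiDiag_le hC n).trans_eq ?_)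
            rw [Nat.card_Ico, nsmul_eq_mul, Nat.cast_sub hpq]
          · rw [abs_mul, abs_of_pos hlen]
            gcongr
            exact abs_symbolMean_le hC _
      _ = _ := by ring
  rw [edgeError, ← min_add_add_left, mul_min_of_nonneg _ _ hlen.le, Nat.cast_sub hpq]
  refine le_min (htrivial.trans ?_) (hwave.trans_eq ?_)
  · gcongr
    exact le_add_of_nonneg_left (by positivity)
  · rw [mul_add (q - p : ℝ), mul_div_left_comm, Real.div_sqrt]
    ring

theorem abs_sum_Ico_jacobiDiag_sub_symbolMean_le (hf : LipschitzWith K f) (hC : ∀ x, |f x| ≤ C)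
    (hpq : p < q) (hqk : q ≤ k) :
    |∑ n ∈ Finset.Ico p q, (jacobiDiag k a b f n - symbolMean f (a n, b n))|
      ≤ 8 * K * (q - p) * ∑ i ∈ Finset.Ico (p - 1) (q - 1),
        (|a (i + 1) - a i| + |b (i + 1) - b i|)
        + ∑ j ∈ Finset.Ico p q, edgeError C K (q - p) (b j) := by
  have hlen : (0 : ℝ) < q - p := sub_pos.mpr (by exact_mod_cast hpq)
  have hcard : ((Finset.Ico p q).card : ℝ) = q - p := by rw [Nat.card_Ico, Nat.cast_sub hpq.le]
  refine le_of_mul_le_mul_left ?_ hlen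
  calc _ = |∑ j ∈ Finset.Ico p q,
        (∑ n ∈ Finset.Ico p q, jacobiDiag k a b f n - (q - p) * symbolMean f (a j, b j))| := by
        rw [Finset.sum_sub_distrib, Finset.sum_sub_distrib, Finset.sum_const, nsmul_eq_mul, hcard,
          ← Finset.mul_sum, ← mul_sub, abs_mul, abs_of_pos hlen]
    _ ≤ _ := (Finset.abs_sum_le_sum_abs _ _).trans (Finset.sum_le_sum fun j hj =>
        abs_sum_jacobiDiag_sub_mul_symbolMean_le hf hC hqk hj)
    _ = _ := by
        rw [← Finset.mul_sum, Finset.sum_add_distrib, Finset.sum_const, nsmul_eq_mul, hcard]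
        ring

theorem abs_sum_range_mul_jacobiDiag_sub_symbolMean_le (hf : LipschitzWith K f)
    (hC : ∀ x, |f x| ≤ C) {N : ℕ} (hL : 0 < L) (hNk : N * L ≤ k) :
    |∑ n ∈ Finset.range (N * L), (jacobiDiag k a b f n - symbolMean f (a n, b n))|
      ≤ 8 * K * L * ∑ i ∈ Finset.range (k - 1), (|a (i + 1) - a i| + |b (i + 1) - b i|)
        + ∑ j ∈ Finset.range k, edgeError C K L (b j) := by
  set g : ℕ → ℝ := fun n => jacobiDiag k a b f n - symbolMean f (a n, b n)
  set Δ : ℕ → ℝ := fun i => |a (i + 1) - a i| + |b (i + 1) - b i|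
  have hC0 : 0 ≤ C := (abs_nonneg _).trans (hC 0)
  have hblock : ∀ m ∈ Finset.range N, |∑ n ∈ Finset.Ico (m * L) ((m + 1) * L), g n|
      ≤ 8 * K * L * ∑ i ∈ Finset.Ico (m * L - 1) ((m + 1) * L - 1), Δ i
        + ∑ j ∈ Finset.Ico (m * L) ((m + 1) * L), edgeError C K L (b j) := fun m hm => by
    have hlen : (m + 1) * L - m * L = L := by rw [add_one_mul, Nat.add_sub_cancel_left]
    have h := abs_sum_Ico_jacobiDiag_sub_symbolMean_le (a := a) (b := b) (k := k) (p := m * L)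
      (q := (m + 1) * L) hf hC (by nlinarith)
      ((Nat.mul_le_mul_right L (Finset.mem_range.mp hm)).trans hNk)
    rwa [← Nat.cast_sub (by nlinarith), hlen] at h
  have hmono : Monotone fun m => m * L := fun _ _ h => Nat.mul_le_mul_right L h
  have hg := sum_range_sum_Ico_of_monotone hmono g N
  have hΔ := sum_range_sum_Ico_of_monotone (u := fun m => m * L - 1)
    (fun _ _ h => Nat.sub_le_sub_right (hmono h) 1) Δ N
  have he := sum_range_sum_Ico_of_monotone hmono (fun j => edgeError C K L (b j)) N
  simp only [zero_mul, Nat.zero_sub, ← Finset.range_eq_Ico] at hg hΔ he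
  rw [← hg]
  refine (Finset.abs_sum_le_sum_abs _ _).trans ((Finset.sum_le_sum hblock).trans ?_)
  rw [Finset.sum_add_distrib, ← Finset.mul_sum, hΔ, he]
  gcongr
  exact fun _ _ _ => edgeError_nonneg hC0 K L _

theorem abs_jacobiTrace_sub_sum_symbolMean_le (hf : LipschitzWith K f) (hC : ∀ x, |f x| ≤ C)
    (k : ℕ) (hL : 0 < L) :
    |jacobiTrace k a b f - ∑ j ∈ Finset.range k, symbolMean f (a j, b j)|
      ≤ 8 * K * L * ∑ i ∈ Finset.range (k - 1), (|a (i + 1) - a i| + |b (i + 1) - b i|)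
        + ∑ j ∈ Finset.range k, edgeError C K L (b j) + L * (2 * C) := by
  have hC0 : 0 ≤ C := (abs_nonneg _).trans (hC 0)
  have hNk : k / L * L ≤ k := Nat.div_mul_le_self k L
  have hrest : |∑ n ∈ Finset.Ico (k / L * L) k, (jacobiDiag k a b f n - symbolMean f (a n, b n))|
      ≤ L * (2 * C) := by
    refine (Finset.abs_sum_le_sum_abs _ _).trans ((Finset.sum_le_card_nsmul _ _ (2 * C)
      fun n _ => ?_).trans ?_)
    · exact (abs_sub _ _).trans ((add_le_add (abs_jacobiDiag_le hC n)
        (abs_symbolMean_le hC _)).trans_eq (two_mul C).symm)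
    · rw [Nat.card_Ico, nsmul_eq_mul]
      gcongr
      have := Nat.div_add_mod' k L
      have := Nat.mod_lt k hL
      omega
  rw [← sum_jacobiDiag, ← Finset.sum_sub_distrib, ← Finset.sum_range_add_sum_Ico _ hNk]
  exact (abs_add_le _ _).trans
    (add_le_add (abs_sum_range_mul_jacobiDiag_sub_symbolMean_le hf hC hL hNk) hrest)

end BlockDecomposition

section Limit

variable {a b : ℕ → ℕ → ℝ} {μ : Measure (ℝ × ℝ)} {f : ℝ → ℝ} {C : ℝ} {K : ℝ≥0}

theorem continuous_edgeError (C : ℝ) (K : ℝ≥0) (L : ℕ) : Continuous (edgeError C K L) := by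
  unfold edgeError
  fun_prop

theorem abs_edgeError_le (hC : 0 ≤ C) (K : ℝ≥0) (L : ℕ) (y : ℝ) : |edgeError C K L y| ≤ 2 * C :=
  (abs_of_nonneg (edgeError_nonneg hC K L y)).trans_le (min_le_left _ _)

theorem tendsto_edgeError (hC : 0 ≤ C) (K : ℝ≥0) (y : ℝ) :
    Tendsto (fun L => edgeError C K L y) atTop (nhds 0) :=
  squeeze_zero (fun L => edgeError_nonneg hC K L y) (fun _ => min_le_right _ _)
    (tendsto_const_nhds.div_atTop (Real.tendsto_sqrt_atTop.comp tendsto_natCast_atTop_atTop))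

theorem tendsto_integral_edgeError (hC : 0 ≤ C) (K : ℝ≥0) (μ : Measure (ℝ × ℝ))
    [IsFiniteMeasure μ] :
    Tendsto (fun L => ∫ p, edgeError C K L p.2 ∂μ) atTop (nhds 0) := by
  have h := tendsto_integral_of_dominated_convergence (μ := μ) (fun _ => 2 * C)
    (F := fun L p => edgeError C K L p.2) (f := fun _ => 0)
    (fun L => ((continuous_edgeError C K L).comp continuous_snd).aestronglyMeasurable)
    (integrable_const _) (fun L => ae_of_all _ fun p => abs_edgeError_le hC K L p.2)
    (ae_of_all _ fun p => tendsto_edgeError hC K p.2)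
  rwa [integral_zero] at h

/-- The total variation of the `k`-th vector is `o(k)`: the first of the two conditions defining
the class `𝒮`. -/
def SmallVariation (a : ℕ → ℕ → ℝ) : Prop :=
  (fun k : ℕ => ∑ i ∈ Finset.range (k - 1), |a k (i + 1) - a k i|) =o[atTop] fun k : ℕ => (k : ℝ)

theorem tendsto_average_blockError (ha : SmallVariation a) (hb : SmallVariation b)
    (hμ : MuDistributedR a b μ) (hC : 0 ≤ C) (K : ℝ≥0) (L : ℕ) :
    Tendsto (fun k : ℕ => 1 / (k : ℝ) * (8 * K * L *
      ∑ i ∈ Finset.range (k - 1), (|a k (i + 1) - a k i| + |b k (i + 1) - b k i|)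
        + ∑ j ∈ Finset.range k, edgeError C K L (b k j) + L * (2 * C)))
      atTop (nhds (∫ p, edgeError C K L p.2 ∂μ)) := by
  have hvar := (ha.add hb).tendsto_div_nhds_zero.const_mul (8 * K * L : ℝ)
  have hedge := hμ (fun p => edgeError C K L p.2)
    ((continuous_edgeError C K L).comp continuous_snd) ⟨2 * C, fun p => abs_edgeError_le hC K L p.2⟩
  have hrest : Tendsto (fun k : ℕ => L * (2 * C) / (k : ℝ)) atTop (nhds 0) :=
    tendsto_const_nhds.div_atTop tendsto_natCast_atTop_atTop
  convert (hvar.add hedge).add hrest using 2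
  · rw [Finset.sum_add_distrib]
    ring
  · ring

theorem tendsto_jacobiTrace_sub_sum_symbolMean [IsFiniteMeasure μ] (ha : SmallVariation a)
    (hb : SmallVariation b) (hμ : MuDistributedR a b μ) (hf : LipschitzWith K f)
    (hC : ∀ x, |f x| ≤ C) :
    Tendsto (fun k : ℕ => 1 / (k : ℝ) * (jacobiTrace k (a k) (b k) f
      - ∑ j ∈ Finset.range k, symbolMean f (a k j, b k j))) atTop (nhds 0) := by
  have hC0 : 0 ≤ C := (abs_nonneg _).trans (hC 0)
  rw [Metric.tendsto_nhds]
  intro ε hε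
  obtain ⟨L, hLε, hL⟩ := (((tendsto_integral_edgeError hC0 K μ).eventually_lt_const hε).and
    (eventually_gt_atTop 0)).exists
  filter_upwards [(tendsto_average_blockError ha hb hμ hC0 K L).eventually_lt_const hLε] with k hk
  rw [Real.dist_0_eq_abs, abs_mul, abs_of_nonneg (by positivity : 0 ≤ 1 / (k : ℝ))]
  refine lt_of_le_of_lt ?_ hk
  gcongr
  exact abs_jacobiTrace_sub_sum_symbolMean_le hf hC k hL

theorem tendsto_jacobiTrace_of_lipschitzWith [IsFiniteMeasure μ] (ha : SmallVariation a)
    (hb : SmallVariation b) (hμ : MuDistributedR a b μ) (hf : LipschitzWith K f)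
    (hC : ∀ x, |f x| ≤ C) :
    Tendsto (fun k : ℕ => 1 / (k : ℝ) * jacobiTrace k (a k) (b k) f) atTop
      (nhds (∫ p, symbolMean f p ∂μ)) := by
  simpa [mul_sub] using (tendsto_jacobiTrace_sub_sum_symbolMean ha hb hμ hf hC).add
    (hμ (symbolMean f) (continuous_symbolMean hf.continuous hC) ⟨C, abs_symbolMean_le hC⟩)

end Limit

section WeakConvergence

/-- The empirical spectral distribution of the `(k + 1) × (k + 1)` Jacobi matrix. -/
def spectralDistribution (k : ℕ) (a b : ℕ → ℝ) : ProbabilityMeasure ℝ :=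
  ⟨(PMF.uniformOfFintype (Fin (k + 1))).toMeasure.map
    (jacobiMatrix_isHermitian (k + 1) a b).eigenvalues,
    Measure.isProbabilityMeasure_map (measurable_of_finite _).aemeasurable⟩

theorem integral_spectralDistribution (k : ℕ) (a b : ℕ → ℝ) {f : ℝ → ℝ} (hf : Continuous f) :
    ∫ x, f x ∂(spectralDistribution k a b : Measure ℝ)
      = 1 / ((k + 1 : ℕ) : ℝ) * jacobiTrace (k + 1) a b f := by
  rw [spectralDistribution, ProbabilityMeasure.coe_mk,
    integral_map (measurable_of_finite _).aemeasurable hf.aestronglyMeasurable, PMF.integral_eq_sum,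
    jacobiTrace, Finset.mul_sum]
  simp [ENNReal.toReal_add]

/-- The law of `x + 2 y cos t` when `(x, y)` has law `μ` and `t` is independent and uniform on
`(0, π]`. -/
def symbolDistribution (μ : Measure (ℝ × ℝ)) [IsProbabilityMeasure μ] : ProbabilityMeasure ℝ :=
  ⟨(μ.prod uniformAngle).map fun q => q.1.1 + 2 * q.1.2 * Real.cos q.2,
    Measure.isProbabilityMeasure_map (Continuous.aemeasurable (by fun_prop))⟩

theorem integral_symbolDistribution (μ : Measure (ℝ × ℝ)) [IsProbabilityMeasure μ] {f : ℝ → ℝ}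
    {C : ℝ} (hfc : Continuous f) (hC : ∀ x, |f x| ≤ C) :
    ∫ x, f x ∂(symbolDistribution μ : Measure ℝ) = ∫ p, symbolMean f p ∂μ := by
  rw [symbolDistribution, ProbabilityMeasure.coe_mk, integral_map
    (Continuous.aemeasurable (by fun_prop)) hfc.aestronglyMeasurable, integral_prod]
  · rfl
  · exact Integrable.of_bound (Continuous.aestronglyMeasurable (by fun_prop)) C
      (ae_of_all _ fun _ => hC _)

theorem tendsto_spectralDistribution {a b : ℕ → ℕ → ℝ} (ha : SmallVariation a)
    (hb : SmallVariation b) {μ : Measure (ℝ × ℝ)} [IsProbabilityMeasure μ]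
    (hμ : MuDistributedR a b μ) :
    Tendsto (fun k => spectralDistribution k (a (k + 1)) (b (k + 1))) atTop
      (nhds (symbolDistribution μ)) := by
  rw [tendsto_iff_forall_lipschitz_integral_tendsto]
  rintro f ⟨D, hD⟩ ⟨K, hK⟩
  have hC : ∀ x, |f x| ≤ |f 0| + D := fun x => by
    have := Real.dist_eq (f x) (f 0) ▸ hD x 0
    linarith [abs_sub_abs_le_abs_sub (f x) (f 0)]
  simp_rw [integral_spectralDistribution _ _ _ hK.continuous,
    integral_symbolDistribution μ hK.continuous hC]
  exact (tendsto_jacobiTrace_of_lipschitzWith ha hb hμ hK hC).comp (tendsto_add_atTop_nat 1)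

end WeakConvergence

theorem isLittleO_rpow_rpow_atTop {r s : ℝ} (h : r < s) :
    (fun x : ℝ => x ^ r) =o[atTop] fun x => x ^ s := by
  refine Asymptotics.isLittleO_of_tendsto'
    ((eventually_gt_atTop 0).mono fun x hx h0 => absurd h0 (Real.rpow_pos_of_pos hx s).ne')
    ((tendsto_rpow_neg_atTop (sub_pos.mpr h)).congr' ?_)
  filter_upwards [eventually_gt_atTop 0] with x hx
  rw [neg_sub, Real.rpow_sub hx]

theorem MemS'.smallVariation {a : ℕ → ℕ → ℝ} (ha : MemS' a) : SmallVariation a := by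
  have hpow : (fun k : ℕ => (k : ℝ) ^ (1 - 1 / 2 : ℝ)) =o[atTop] fun k : ℕ => (k : ℝ) := by
    simpa only [Function.comp_def, Real.rpow_one] using
      (isLittleO_rpow_rpow_atTop (by norm_num : (1 - 1 / 2 : ℝ) < 1)).comp_tendsto
        tendsto_natCast_atTop_atTop
  exact (ha.1 (1 / 2) (by norm_num)).trans_isLittleO hpow

theorem trace_formula_memS'_general (a b : ℕ → ℕ → ℝ) (ha : SmallVariation a)
    (hb : SmallVariation b) (μ : Measure (ℝ × ℝ)) [IsProbabilityMeasure μ]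
    (hμ : MuDistributedR a b μ)
    (φ : ℝ → ℝ) (hφc : Continuous φ) (hφb : ∃ C : ℝ, ∀ x, |φ x| ≤ C) :
    Filter.Tendsto (fun k : ℕ => (1 / (k : ℝ)) * jacobiTrace k (a k) (b k) φ)
      Filter.atTop
      (nhds ((1 / Real.pi) *
        ∫ p, (∫ t in (0 : ℝ)..Real.pi, φ (p.1 + 2 * p.2 * Real.cos t)) ∂μ)) := by
  obtain ⟨C, hC⟩ := hφb
  have h := ProbabilityMeasure.tendsto_iff_forall_integral_tendsto.mp
    (tendsto_spectralDistribution ha hb hμ)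
    (BoundedContinuousFunction.ofNormedAddCommGroup φ hφc C hC)
  simp only [BoundedContinuousFunction.coe_ofNormedAddCommGroup,
    integral_spectralDistribution _ _ _ hφc, integral_symbolDistribution μ hφc hC, symbolMean,
    integral_uniformAngle, integral_const_mul] at h
  exact (tendsto_add_atTop_iff_nat 1).mp h

/-- Theorem, unbounded case: if `(a^k)ₖ, (b^k)ₖ ∈ 𝒮′` and `(a^k,b^k)ₖ` is
`μ`-distributed for a tight probability measure `μ` on `ℝ²`, then for bounded continuous `φ`,
`lim (1/k)·Trace[φ(J(a^k,b^k))] = (1/π) ∫_{ℝ²} ∫_0^π φ(x+2y cos t) dt dμ(x,y)`. -/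
theorem trace_formula_memS' (a b : ℕ → ℕ → ℝ) (ha : MemS' a) (hb : MemS' b)
    (μ : Measure (ℝ × ℝ)) [IsProbabilityMeasure μ]
    (htight : TightRect μ) (hμ : MuDistributedR a b μ)
    (φ : ℝ → ℝ) (hφc : Continuous φ) (hφb : ∃ C : ℝ, ∀ x, |φ x| ≤ C) :
    Filter.Tendsto (fun k : ℕ => (1 / (k : ℝ)) * jacobiTrace k (a k) (b k) φ)
      Filter.atTop
      (nhds ((1 / Real.pi) *
        ∫ p, (∫ t in (0 : ℝ)..Real.pi, φ (p.1 + 2 * p.2 * Real.cos t)) ∂μ)) :=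
  trace_formula_memS'_general a b ha.smallVariation hb.smallVariation μ hμ φ hφc hφb
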